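/- arXiv:1706.07175 — 5 statements merged into one kernel-verified Lean document; each statement's English description precedes it below -/
import Mathlib

section
/- Let E ⊂ ℂ be a compact set, μ a Borel probability measure on ℂ with support contained in E, and (P̂_n)_{n≥0} a sequence of polynomials with deg P̂_n = n that is orthonormal in L²(μ). Assume limsup_{n→∞} (log ‖P̂_n‖_E)/(log n) = α < ∞. Define m_k(𝒫̂) = limsup_{n→∞} log(‖P̂_n^{(k)}‖_E / ‖P̂_n‖_E)/(log n) for k ≥ 1 and m*(𝒫̂) = limsup_{k→∞} m_k(𝒫̂)/k. Then m(E) = m*(𝒫̂), as an equality in [0,∞]. -/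
open Polynomial Filter
open scoped ENNReal

/-- The `k`-th derivative `P^{(k)}` of a polynomial in one complex variable. -/
noncomputable def dIter (k : ℕ) (P : Polynomial ℂ) : Polynomial ℂ :=
  (fun Q : Polynomial ℂ => Polynomial.derivative Q)^[k] P

/-- The Markov exponent `m_k(q) ∈ [0,∞]` for a (semi)norm `q` on `ℂ[X]`: the infimum of the
set of `s > 0` such that `q(P^{(k)}) ≤ M (deg P)^s q(P)` for some `M > 0` and all `P` with
`deg P ≥ 1` (`sInf ∅ = ∞` in `ℝ≥0∞`). -/
noncomputable def mkPoly (q : Polynomial ℂ → ℝ) (k : ℕ) : ℝ≥0∞ :=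
  sInf (ENNReal.ofReal '' {s : ℝ | 0 < s ∧ ∃ M : ℝ, 0 < M ∧
    ∀ P : Polynomial ℂ, 1 ≤ P.natDegree →
      q (dIter k P) ≤ M * (P.natDegree : ℝ) ^ s * q P})

open MeasureTheory

/-- The supremum norm `‖P‖_E = sup_{z ∈ E} |P(z)|` on polynomials in one complex variable. -/
noncomputable def supC (E : Set ℂ) (P : Polynomial ℂ) : ℝ :=
  ⨆ z : E, ‖P.eval (z : ℂ)‖

/-- `m_k(𝒫̂) = limsup_{n→∞} log(‖P̂_n^{(k)}‖_E / ‖P̂_n‖_E) / log n`, as an extended real. -/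
noncomputable def mkSeq (E : Set ℂ) (Phat : ℕ → Polynomial ℂ) (k : ℕ) : EReal :=
  Filter.atTop.limsup fun n : ℕ =>
    ((Real.log (supC E (dIter k (Phat n)) / supC E (Phat n)) / Real.log n : ℝ) : EReal)

/-- The asymptotic exponent `m*(𝒫̂) = limsup_{k→∞} m_k(𝒫̂)/k`. -/
noncomputable def mStarSeq (E : Set ℂ) (Phat : ℕ → Polynomial ℂ) : EReal :=
  Filter.atTop.limsup fun k : ℕ => (((k : ℝ)⁻¹ : ℝ) : EReal) * mkSeq E Phat k

/-!
Let `S n` be polynomials of degree `n` such that the coefficients of an expansion in `S` are bounded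
by its sup norm; for an orthonormal sequence these are Fourier coefficients.

If Markov's inequality holds with exponent `s`, iterating it `k` times bounds
`‖(S n)^{(k)}‖ / ‖S n‖` by a constant times `n ^ (s * k)`, so `m*(S) ≤ s`. Conversely, let
`m*(S) < r < t` and `‖S n‖ ≤ n ^ a` for large `n`. Expanding `P` of degree `n` in `S` and
differentiating `k` times gives `‖P^{(k)}‖ ≤ M n ^ (r * k + a + 1) ‖P‖`, and for large `k` the loss
`a + 1` is at most `(t - r) * k`. To return to first derivatives, take `z ∈ E`: the polynomial
`(P - P(z)) ^ k` has `k`-th derivative `k! P'(z) ^ k` at `z` and norm at most `(2 ‖P‖) ^ k`, so the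
`k`-th root of the inequality of order `k` is Markov's inequality with exponent `t`.
-/

section SupNorm

variable {E : Set ℂ}

lemma supC_nonneg (E : Set ℂ) (P : ℂ[X]) : 0 ≤ supC E P :=
  Real.iSup_nonneg fun _ => norm_nonneg _

lemma supC_zero (E : Set ℂ) : supC E 0 = 0 := by
  simp [supC]

lemma supC_le {P : ℂ[X]} {b : ℝ} (hb : 0 ≤ b) (h : ∀ z ∈ E, ‖P.eval z‖ ≤ b) : supC E P ≤ b :=
  Real.iSup_le (fun z => h z z.2) hb

lemma norm_eval_le_supC (hE : Bornology.IsBounded E) (P : ℂ[X]) {z : ℂ} (hz : z ∈ E) :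
    ‖P.eval z‖ ≤ supC E P := by
  have hbdd : BddAbove ((fun w => ‖P.eval w‖) '' E) :=
    (hE.isCompact_closure.bddAbove_image (by fun_prop)).mono (Set.image_mono subset_closure)
  rw [Set.image_eq_range] at hbdd
  exact le_ciSup hbdd ⟨z, hz⟩

lemma supC_smul (E : Set ℂ) (a : ℂ) (P : ℂ[X]) : supC E (a • P) = ‖a‖ * supC E P := by
  simp only [supC, eval_smul, norm_smul, Real.mul_iSup_of_nonneg (norm_nonneg a)]

lemma supC_pow (hne : E.Nonempty) (P : ℂ[X]) (n : ℕ) : supC E (P ^ n) = supC E P ^ n := by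
  have := hne.to_subtype
  simp only [supC, eval_pow, norm_pow, Real.iSup_pow fun z : E => norm_nonneg (P.eval (z : ℂ))]

lemma supC_sum_smul_le (hE : Bornology.IsBounded E) {ι : Type*} (s : Finset ι) (a : ι → ℂ)
    (Q : ι → ℂ[X]) : supC E (∑ j ∈ s, a j • Q j) ≤ ∑ j ∈ s, ‖a j‖ * supC E (Q j) := by
  refine supC_le (Finset.sum_nonneg fun j _ => mul_nonneg (norm_nonneg _) (supC_nonneg _ _))
    fun z hz => ?_
  rw [eval_finsetSum]
  refine norm_sum_le_of_le s fun j _ => ?_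
  rw [eval_smul, norm_smul]
  gcongr
  exact norm_eval_le_supC hE _ hz

lemma supC_sub_C_eval_pow_le (hE : Bornology.IsBounded E) (P : ℂ[X]) {z : ℂ} (hz : z ∈ E)
    (k : ℕ) : supC E ((P - C (P.eval z)) ^ k) ≤ (2 * supC E P) ^ k := by
  have hS := supC_nonneg E P
  refine supC_le (by positivity) fun w hw => ?_
  rw [eval_pow, norm_pow, eval_sub, eval_C]
  gcongr
  calc ‖P.eval w - P.eval z‖ ≤ ‖P.eval w‖ + ‖P.eval z‖ := norm_sub_le _ _
    _ ≤ supC E P + supC E P := by gcongr <;> exact norm_eval_le_supC hE P ‹_›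
    _ = 2 * supC E P := by ring

end SupNorm

section IteratedDerivative

lemma dIter_one (P : ℂ[X]) : dIter 1 P = derivative P := rfl

lemma dIter_succ (k : ℕ) (P : ℂ[X]) : dIter (k + 1) P = derivative (dIter k P) :=
  Function.iterate_succ_apply' _ _ _

lemma natDegree_dIter_le (k : ℕ) (P : ℂ[X]) : (dIter k P).natDegree ≤ P.natDegree :=
  (natDegree_iterate_derivative P k).trans (Nat.sub_le _ _)

lemma dIter_sum_smul {ι : Type*} (k : ℕ) (s : Finset ι) (a : ι → ℂ) (Q : ι → ℂ[X]) :
    dIter k (∑ j ∈ s, a j • Q j) = ∑ j ∈ s, a j • dIter k (Q j) := by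
  simp only [dIter, iterate_derivative_sum, iterate_derivative_smul]

lemma eval_iterate_derivative_pow_of_isRoot {R : Type*} [CommRing R] {Q : R[X]} {z : R}
    (hz : Q.IsRoot z) (k : ℕ) :
    (derivative^[k] (Q ^ k)).eval z = k.factorial * (derivative Q).eval z ^ k := by
  obtain ⟨T, rfl⟩ := dvd_iff_isRoot.2 hz
  have hderiv : (derivative ((X - C z) * T)).eval z = T.eval z := by simp
  have hiter := aeval_iterate_derivative_self (((X - C z) * T) ^ k) k z (p' := T ^ k)
    (by rw [Algebra.algebraMap_self, Polynomial.map_id, mul_pow])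
  rw [hderiv, ← coe_aeval_eq_eval, hiter, nsmul_eq_mul, eval_pow, coe_aeval_eq_eval]

lemma norm_eval_derivative_pow_le {E : Set ℂ} (hE : Bornology.IsBounded E) (P : ℂ[X]) {z : ℂ}
    (hz : z ∈ E) (k : ℕ) :
    ‖(derivative P).eval z‖ ^ k ≤ supC E (dIter k ((P - C (P.eval z)) ^ k)) := by
  have hroot : (P - C (P.eval z)).IsRoot z := by simp
  have hvalue := eval_iterate_derivative_pow_of_isRoot hroot k
  rw [derivative_sub, derivative_C, sub_zero] at hvalue
  calc ‖(derivative P).eval z‖ ^ k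
      ≤ k.factorial * ‖(derivative P).eval z‖ ^ k :=
        le_mul_of_one_le_left (by positivity) (mod_cast k.factorial_pos)
    _ = ‖(dIter k ((P - C (P.eval z)) ^ k)).eval z‖ := by
        rw [dIter, hvalue, norm_mul, norm_pow, Complex.norm_natCast]
    _ ≤ supC E (dIter k ((P - C (P.eval z)) ^ k)) := norm_eval_le_supC hE _ hz

end IteratedDerivative

/-- Markov's inequality of order `k` with exponent `s` for the sup norm on `E`; the infimum of the
positive such `s` is `mkPoly (supC E) k`. -/
def HasMarkovInequality (E : Set ℂ) (k : ℕ) (s : ℝ) : Prop :=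
  ∃ M : ℝ, 0 < M ∧ ∀ P : ℂ[X], 1 ≤ P.natDegree →
    supC E (dIter k P) ≤ M * (P.natDegree : ℝ) ^ s * supC E P

section Markov

variable {E : Set ℂ} {k : ℕ} {s : ℝ}

lemma HasMarkovInequality.one_of_mul_natCast (hE : Bornology.IsBounded E) (hk : k ≠ 0)
    (h : HasMarkovInequality E k (s * k)) : HasMarkovInequality E 1 s := by
  obtain ⟨M, hM, h⟩ := h
  have hk0 : (0 : ℝ) < k := by positivity
  refine ⟨M ^ (k⁻¹ : ℝ) * (k : ℝ) ^ s * 2, by positivity, fun P hP => ?_⟩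
  have hS := supC_nonneg E P
  refine supC_le (by positivity) fun z hz => le_of_pow_le_pow_left₀ hk (by positivity) ?_
  have hdeg : ((P - C (P.eval z)) ^ k).natDegree = k * P.natDegree := by
    rw [natDegree_pow, natDegree_sub_C]
  calc ‖(derivative P).eval z‖ ^ k
      ≤ supC E (dIter k ((P - C (P.eval z)) ^ k)) := norm_eval_derivative_pow_le hE P hz k
    _ ≤ M * ((k * P.natDegree : ℕ) : ℝ) ^ (s * k) * supC E ((P - C (P.eval z)) ^ k) := by
        rw [← hdeg]
        exact h _ (hdeg ▸ Nat.mul_pos hk.bot_lt hP)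
    _ ≤ M * ((k * P.natDegree : ℕ) : ℝ) ^ (s * k) * (2 * supC E P) ^ k := by
        gcongr
        exact supC_sub_C_eval_pow_le hE P hz k
    _ = (M ^ (k⁻¹ : ℝ) * (k : ℝ) ^ s * 2 * (P.natDegree : ℝ) ^ s * supC E P) ^ k := by
        rw [Nat.cast_mul, Real.rpow_mul_natCast (by positivity),
          Real.mul_rpow hk0.le (Nat.cast_nonneg _)]
        simp only [mul_pow]
        rw [Real.rpow_inv_natCast_pow hM.le hk]
        ring

lemma HasMarkovInequality.mul_natCast (hs : 0 ≤ s) (h : HasMarkovInequality E 1 s) (k : ℕ) :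
    HasMarkovInequality E k (s * k) := by
  obtain ⟨M, hM, h⟩ := h
  refine ⟨M ^ k, by positivity, fun P hP => ?_⟩
  rw [Real.rpow_mul_natCast (Nat.cast_nonneg _), ← mul_pow]
  induction k with
  | zero => simp [dIter]
  | succ k ih =>
    have hS := supC_nonneg E P
    have hSk := supC_nonneg E (dIter k P)
    rcases Nat.eq_zero_or_pos (dIter k P).natDegree with hdeg | hdeg
    · rw [dIter_succ, derivative_of_natDegree_zero hdeg, supC_zero]
      positivity
    · calc supC E (dIter (k + 1) P)
          ≤ M * ((dIter k P).natDegree : ℝ) ^ s * supC E (dIter k P) := by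
            rw [dIter_succ]
            exact h _ hdeg
        _ ≤ M * (P.natDegree : ℝ) ^ s * supC E (dIter k P) := by
            gcongr
            exact natDegree_dIter_le k P
        _ ≤ M * (P.natDegree : ℝ) ^ s * ((M * (P.natDegree : ℝ) ^ s) ^ k * supC E P) := by
            gcongr
        _ = (M * (P.natDegree : ℝ) ^ s) ^ (k + 1) * supC E P := by ring

lemma HasMarkovInequality.mono {r : ℝ} (h : HasMarkovInequality E k r) (hrs : r ≤ s) :
    HasMarkovInequality E k s := by
  obtain ⟨M, hM, h⟩ := h
  refine ⟨M, hM, fun P hP => (h P hP).trans ?_⟩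
  have hS := supC_nonneg E P
  have hn : (1 : ℝ) ≤ P.natDegree := by exact_mod_cast hP
  gcongr

lemma exists_supC_X_sub_C_pos (hE : Bornology.IsBounded E) (hne : E.Nonempty) :
    ∃ c : ℂ, 0 < supC E (X - C c) := by
  obtain ⟨z, hz⟩ := hne
  refine ⟨z + 1, one_pos.trans_le ?_⟩
  calc (1 : ℝ) = ‖(X - C (z + 1)).eval z‖ := by simp
    _ ≤ supC E (X - C (z + 1)) := norm_eval_le_supC hE _ hz

/-- Tested on the powers of `X - C c`, Markov's inequality reads `n ≤ M ‖X - c‖ n ^ s`. -/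
lemma HasMarkovInequality.one_le (hE : Bornology.IsBounded E) (hne : E.Nonempty)
    (h : HasMarkovInequality E 1 s) : 1 ≤ s := by
  obtain ⟨M, -, h⟩ := h
  obtain ⟨c, hc⟩ := exists_supC_X_sub_C_pos hE hne
  set r := supC E (X - C c) with hr
  have hbound (n : ℕ) : ((n + 1 : ℕ) : ℝ) ^ (1 - s) ≤ M * r := by
    have hdeg : ((X - C c) ^ (n + 1)).natDegree = n + 1 := by
      rw [natDegree_pow, natDegree_X_sub_C, mul_one]
    have hderiv : dIter 1 ((X - C c) ^ (n + 1)) = ((n + 1 : ℕ) : ℂ) • (X - C c) ^ n := by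
      rw [dIter_one, derivative_X_sub_C_pow, Nat.add_sub_cancel, smul_eq_C_mul, C_eq_natCast]
    have hmarkov := h _ (hdeg ▸ Nat.le_add_left 1 n)
    rw [hdeg, hderiv, supC_smul, supC_pow hne, supC_pow hne, ← hr, Complex.norm_natCast,
      pow_succ' r, ← mul_assoc] at hmarkov
    have hn : (0 : ℝ) < (n + 1 : ℕ) := by positivity
    rw [Real.rpow_sub hn, Real.rpow_one, div_le_iff₀ (by positivity), mul_right_comm]
    exact le_of_mul_le_mul_right hmarkov (by positivity)
  by_contra! hs
  have hlim : Tendsto (fun n : ℕ => ((n + 1 : ℕ) : ℝ) ^ (1 - s)) atTop atTop :=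
    (tendsto_rpow_atTop (sub_pos.2 hs)).comp
      (tendsto_natCast_atTop_atTop.comp (tendsto_add_atTop_nat 1))
  obtain ⟨n, hn⟩ := (hlim.eventually_gt_atTop (M * r)).exists
  exact (hbound n).not_gt hn

end Markov

/-- The growth exponent `limsup log (u n) / log n` of a nonnegative sequence. Since
`Real.log 0 = 0`, a vanishing term counts as if it were `1`.
`mkSeq E S k` is the growth exponent of `‖(S n)^{(k)}‖ / ‖S n‖`. -/
noncomputable def growthExponent (u : ℕ → ℝ) : EReal :=
  atTop.limsup fun n : ℕ => ((Real.log (u n) / Real.log n : ℝ) : EReal)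

section Growth

variable {u : ℕ → ℝ}

lemma eventually_le_rpow_of_growthExponent_lt (hu : ∀ n, 0 ≤ u n) {a : ℝ}
    (h : growthExponent u < a) : ∀ᶠ n : ℕ in atTop, u n ≤ (n : ℝ) ^ a := by
  filter_upwards [eventually_lt_of_limsup_lt h, eventually_ge_atTop 2] with n hlt hn
  have hn1 : (1 : ℝ) < n := by exact_mod_cast hn
  rw [EReal.coe_lt_coe_iff, div_lt_iff₀ (Real.log_pos hn1)] at hlt
  rcases (hu n).eq_or_lt with h0 | h0
  · rw [← h0]
    positivity
  · exact (Real.le_rpow_iff_log_le h0 (by positivity)).2 hlt.le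

lemma growthExponent_le_of_eventually_le (hu : ∀ n, 0 ≤ u n) {L r : ℝ} (hr : 0 ≤ r)
    (h : ∀ᶠ n : ℕ in atTop, u n ≤ L * (n : ℝ) ^ r) : growthExponent u ≤ r := by
  have hlim : Tendsto (fun n : ℕ => Real.log (max L 1) / Real.log n + r) atTop (nhds r) := by
    simpa using ((Real.tendsto_log_atTop.comp tendsto_natCast_atTop_atTop).const_div_atTop
      (Real.log (max L 1))).add_const r
  rw [← ((continuous_coe_real_ereal.tendsto r).comp hlim).limsup_eq]
  refine limsup_le_limsup ?_
  filter_upwards [h, eventually_ge_atTop 2] with n hle hn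
  have hn1 : (1 : ℝ) < n := by exact_mod_cast hn
  have hlog := Real.log_pos hn1
  have hpow := Real.one_le_rpow hn1.le hr
  have hone : 1 ≤ max L 1 * (n : ℝ) ^ r := one_le_mul_of_one_le_of_one_le (le_max_right _ _) hpow
  have hmax : u n ≤ max L 1 * (n : ℝ) ^ r := hle.trans (by gcongr; exact le_max_left _ _)
  rw [Function.comp_apply, EReal.coe_le_coe_iff, div_add' _ _ _ hlog.ne']
  gcongr
  rw [← Real.log_rpow (by positivity), ← Real.log_mul (by positivity) (by positivity)]
  rcases (hu n).eq_or_lt with h0 | h0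
  · rw [← h0, Real.log_zero]
    exact Real.log_nonneg hone
  · exact Real.log_le_log h0 hmax

lemma exists_forall_le_mul_rpow {e : ℝ} (he : 0 ≤ e) (h : ∀ᶠ n : ℕ in atTop, u n ≤ (n : ℝ) ^ e) :
    ∃ D : ℝ, 0 < D ∧ ∀ n : ℕ, 1 ≤ n → ∀ j ≤ n, u j ≤ D * (n : ℝ) ^ e := by
  obtain ⟨N, hN⟩ := eventually_atTop.1 h
  have hsum : 0 ≤ ∑ i ∈ Finset.range N, |u i| := Finset.sum_nonneg fun i _ => abs_nonneg _
  refine ⟨∑ i ∈ Finset.range N, |u i| + 1, by positivity, fun n hn j hj => ?_⟩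
  have hpow : (1 : ℝ) ≤ (n : ℝ) ^ e := Real.one_le_rpow (by exact_mod_cast hn) he
  rcases lt_or_ge j N with hjN | hjN
  · calc u j ≤ |u j| := le_abs_self _
      _ ≤ ∑ i ∈ Finset.range N, |u i| :=
        Finset.single_le_sum (fun i _ => abs_nonneg (u i)) (Finset.mem_range.2 hjN)
      _ ≤ (∑ i ∈ Finset.range N, |u i| + 1) * (n : ℝ) ^ e := by nlinarith
  · calc u j ≤ (j : ℝ) ^ e := hN j hjN
      _ ≤ (n : ℝ) ^ e := by gcongr
      _ ≤ (∑ i ∈ Finset.range N, |u i| + 1) * (n : ℝ) ^ e := by nlinarith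

end Growth

section ExtendedReal

lemma inv_natCast_mul_le_iff {k : ℕ} (hk : k ≠ 0) {x : EReal} {s : ℝ} :
    (((k : ℝ)⁻¹ : ℝ) : EReal) * x ≤ s ↔ x ≤ ((s * k : ℝ) : EReal) := by
  have hpos : (0 : EReal) < ((k : ℝ) : EReal) := by exact_mod_cast hk.bot_lt
  rw [EReal.coe_inv, ← EReal.div_eq_inv_mul, EReal.div_le_iff_le_mul hpos (EReal.coe_ne_top _),
    mul_comm s, EReal.coe_mul]

lemma inv_natCast_mul_lt_iff {k : ℕ} (hk : k ≠ 0) {x : EReal} {s : ℝ} :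
    (((k : ℝ)⁻¹ : ℝ) : EReal) * x < s ↔ x < ((s * k : ℝ) : EReal) := by
  have hpos : (0 : EReal) < ((k : ℝ) : EReal) := by exact_mod_cast hk.bot_lt
  rw [EReal.coe_inv, ← EReal.div_eq_inv_mul, EReal.div_lt_iff hpos (EReal.coe_ne_top _),
    EReal.coe_mul]

lemma coe_sInf_image_ofReal_eq {S : Set ℝ} {x : EReal} (hx : 0 ≤ x) (hle : ∀ s ∈ S, x ≤ s)
    (hmem : ∀ t : ℝ, x < t → t ∈ S) : ((sInf (ENNReal.ofReal '' S) : ℝ≥0∞) : EReal) = x := by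
  apply le_antisymm
  · refine EReal.le_of_forall_lt_iff_le.1 fun t ht => ?_
    have ht0 : 0 ≤ t := EReal.coe_nonneg.1 (hx.trans ht.le)
    calc ((sInf (ENNReal.ofReal '' S) : ℝ≥0∞) : EReal) ≤ (ENNReal.ofReal t : EReal) :=
          EReal.coe_ennreal_le_coe_ennreal_iff.2 (sInf_le ⟨t, hmem t ht, rfl⟩)
      _ = t := by rw [EReal.coe_ennreal_ofReal, max_eq_left ht0]
  · rw [← EReal.coe_toENNReal hx, EReal.coe_ennreal_le_coe_ennreal_iff]
    refine le_sInf ?_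
    rintro _ ⟨s, hs, rfl⟩
    exact EReal.toENNReal_le_toENNReal (hle s hs)

end ExtendedReal

/-- The coefficients of a linear combination of the polynomials `S n` are bounded by its sup norm on
`E`, up to a constant factor. Orthonormal sequences are the motivating example. -/
def HasBoundedCoeffs (E : Set ℂ) (S : ℕ → ℂ[X]) : Prop :=
  ∃ B : ℝ, 0 < B ∧ ∀ (n : ℕ) (a : ℕ → ℂ), ∀ j < n,
    ‖a j‖ ≤ B * supC E (∑ i ∈ Finset.range n, a i • S i)

section Expansion

variable {E : Set ℂ} {S : ℕ → ℂ[X]}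

lemma HasBoundedCoeffs.supC_pos (h : HasBoundedCoeffs E S) (n : ℕ) : 0 < supC E (S n) := by
  obtain ⟨B, -, hB⟩ := h
  have hone := hB (n + 1) (Pi.single n 1) n n.lt_succ_self
  simp only [Pi.single_eq_same, norm_one, Pi.single_apply, ite_smul, one_smul, zero_smul,
    Finset.sum_ite_eq', Finset.mem_range, lt_add_iff_pos_right, Order.lt_one_iff,
    ↓reduceIte] at hone
  refine (supC_nonneg E _).lt_of_ne fun h0 => ?_
  rw [← h0, mul_zero] at hone
  exact hone.not_gt one_pos

lemma HasBoundedCoeffs.nonempty (h : HasBoundedCoeffs E S) : E.Nonempty := by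
  by_contra! hE
  have hpos := h.supC_pos 0
  simp [supC, hE] at hpos

lemma exists_eq_sum_smul_of_natDegree_lt {K : Type*} [Field K] (S : Polynomial.Sequence K)
    {P : K[X]} {n : ℕ} (hP : P.natDegree < n) :
    ∃ a : ℕ → K, P = ∑ j ∈ Finset.range n, a j • S j := by
  have hmem : P ∈ Submodule.span K (S '' (Finset.range n : Set ℕ)) := by
    rw [Finset.coe_range, S.span_degreeLT fun i _ => by simp, mem_degreeLT]
    exact degree_le_natDegree.trans_lt (by exact_mod_cast hP)
  obtain ⟨a, ha, rfl⟩ := (Finsupp.mem_span_image_iff_linearCombination K).1 hmem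
  exact ⟨a, Finsupp.sum_of_support_subset a (Finset.coe_subset.1 ha) _ fun j _ => zero_smul K _⟩

lemma HasBoundedCoeffs.exists_eq_sum_smul (h : HasBoundedCoeffs E S)
    (hdeg : ∀ n, (S n).natDegree = n) (P : ℂ[X]) :
    ∃ a : ℕ → ℂ, P = ∑ j ∈ Finset.range (P.natDegree + 1), a j • S j := by
  have hne (n : ℕ) : S n ≠ 0 := fun h0 => by simpa [h0, supC_zero] using h.supC_pos n
  exact exists_eq_sum_smul_of_natDegree_lt
    ⟨S, fun n => by rw [degree_eq_natDegree (hne n), hdeg]⟩ P.natDegree.lt_succ_self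

lemma HasBoundedCoeffs.hasMarkovInequality (h : HasBoundedCoeffs E S)
    (hE : Bornology.IsBounded E) (hdeg : ∀ n, (S n).natDegree = n) {k : ℕ} {e : ℝ} (he : 0 ≤ e)
    (hgrowth : ∀ᶠ n : ℕ in atTop, supC E (dIter k (S n)) ≤ (n : ℝ) ^ e) :
    HasMarkovInequality E k (e + 1) := by
  obtain ⟨D, hD, hderiv⟩ := exists_forall_le_mul_rpow he hgrowth
  have hexpand := h.exists_eq_sum_smul hdeg
  obtain ⟨B, hB0, hB⟩ := h
  refine ⟨2 * B * D, by positivity, fun P hP => ?_⟩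
  obtain ⟨a, ha⟩ := hexpand P
  have hS := supC_nonneg E P
  have hn : (1 : ℝ) ≤ P.natDegree := by exact_mod_cast hP
  have hcoeff (j : ℕ) (hj : j ∈ Finset.range (P.natDegree + 1)) : ‖a j‖ ≤ B * supC E P := by
    have hle := hB _ a j (Finset.mem_range.1 hj)
    rwa [← ha] at hle
  calc supC E (dIter k P)
      ≤ ∑ j ∈ Finset.range (P.natDegree + 1), ‖a j‖ * supC E (dIter k (S j)) := by
        conv_lhs => rw [ha, dIter_sum_smul]
        exact supC_sum_smul_le hE _ _ _
    _ ≤ ∑ _j ∈ Finset.range (P.natDegree + 1),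
          B * supC E P * (D * (P.natDegree : ℝ) ^ e) :=
        Finset.sum_le_sum fun j hj => mul_le_mul (hcoeff j hj)
          (hderiv _ hP j (Nat.lt_succ_iff.1 (Finset.mem_range.1 hj))) (supC_nonneg _ _)
          (by positivity)
    _ = (P.natDegree + 1) * (B * D * (P.natDegree : ℝ) ^ e * supC E P) := by
        rw [Finset.sum_const, Finset.card_range, nsmul_eq_mul]
        push_cast
        ring
    _ ≤ (2 * P.natDegree) * (B * D * (P.natDegree : ℝ) ^ e * supC E P) := by
        gcongr
        linarith
    _ = 2 * B * D * (P.natDegree : ℝ) ^ (e + 1) * supC E P := by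
        rw [Real.rpow_add_one (by positivity)]
        ring

end Expansion

section Orthonormal

lemma integrable_of_continuous_of_isBounded {X F : Type*} [PseudoMetricSpace X] [ProperSpace X]
    [MeasurableSpace X] [OpensMeasurableSpace X] [NormedAddCommGroup F] {μ : Measure X}
    [IsFiniteMeasure μ] {E : Set X} (hE : Bornology.IsBounded E) (hsupp : μ Eᶜ = 0) {f : X → F}
    (hf : Continuous f) : Integrable f μ := by
  obtain ⟨B, hB⟩ := hE.isCompact_closure.exists_bound_of_continuousOn hf.continuousOn
  refine Integrable.of_bound hf.aestronglyMeasurable B ?_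
  filter_upwards [mem_ae_iff.2 hsupp] with z hz using hB z (subset_closure hz)

variable {μ : Measure ℂ} [IsFiniteMeasure μ] {E : Set ℂ}

lemma norm_integral_eval_mul_conj_le (hE : Bornology.IsBounded E) (hsupp : μ Eᶜ = 0)
    (P Q : ℂ[X]) :
    ‖∫ z, P.eval z * (starRingEnd ℂ) (Q.eval z) ∂μ‖ ≤
      (μ.real Set.univ + ∫ z, ‖Q.eval z‖ ^ 2 ∂μ) / 2 * supC E P := by
  have hint {f : ℂ → ℝ} (hf : Continuous f) : Integrable f μ :=
    integrable_of_continuous_of_isBounded hE hsupp hf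
  calc ‖∫ z, P.eval z * (starRingEnd ℂ) (Q.eval z) ∂μ‖
      ≤ ∫ z, ‖P.eval z * (starRingEnd ℂ) (Q.eval z)‖ ∂μ := norm_integral_le_integral_norm _
    _ ≤ ∫ z, (1 + ‖Q.eval z‖ ^ 2) / 2 * supC E P ∂μ := by
        refine integral_mono_ae (hint (by fun_prop)) (hint (by fun_prop)) ?_
        filter_upwards [mem_ae_iff.2 hsupp] with z hz
        have hamgm : ‖Q.eval z‖ ≤ (1 + ‖Q.eval z‖ ^ 2) / 2 := by
          nlinarith [sq_nonneg (‖Q.eval z‖ - 1)]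
        rw [norm_mul, RCLike.norm_conj, mul_comm]
        exact mul_le_mul hamgm (norm_eval_le_supC hE P hz) (norm_nonneg _) (by positivity)
    _ = (μ.real Set.univ + ∫ z, ‖Q.eval z‖ ^ 2 ∂μ) / 2 * supC E P := by
        rw [integral_mul_const, integral_div, integral_add (integrable_const 1)
          (hint (by fun_prop)), integral_const, smul_eq_mul, mul_one]

lemma integral_sum_smul_eval_mul_conj (hE : Bornology.IsBounded E) (hsupp : μ Eᶜ = 0)
    {ι : Type*} (s : Finset ι) (a : ι → ℂ) (S : ι → ℂ[X]) (Q : ℂ[X]) :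
    ∫ z, (∑ i ∈ s, a i • S i).eval z * (starRingEnd ℂ) (Q.eval z) ∂μ =
      ∑ i ∈ s, a i * ∫ z, (S i).eval z * (starRingEnd ℂ) (Q.eval z) ∂μ := by
  simp only [eval_finsetSum, eval_smul, smul_eq_mul, Finset.sum_mul, mul_assoc]
  rw [integral_finsetSum _ fun i _ =>
    integrable_of_continuous_of_isBounded hE hsupp (by fun_prop)]
  simp only [integral_const_mul]

lemma integral_norm_sq_eq_one {X : Type*} [MeasurableSpace X] {μ : Measure X} {f : X → ℂ}
    (h : ∫ x, f x * (starRingEnd ℂ) (f x) ∂μ = 1) : ∫ x, ‖f x‖ ^ 2 ∂μ = 1 := by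
  simp only [Complex.mul_conj, Complex.normSq_eq_norm_sq] at h
  rw [integral_complex_ofReal] at h
  exact_mod_cast h

lemma hasBoundedCoeffs_of_orthonormal (hE : Bornology.IsBounded E) (hsupp : μ Eᶜ = 0)
    {S : ℕ → ℂ[X]}
    (horth : ∀ i j : ℕ, ∫ z, (S i).eval z * (starRingEnd ℂ) ((S j).eval z) ∂μ =
      if i = j then 1 else 0) : HasBoundedCoeffs E S := by
  refine ⟨(μ.real Set.univ + 1) / 2, by positivity, fun n a j hj => ?_⟩
  have hfourier : ∫ z, (∑ i ∈ Finset.range n, a i • S i).eval z *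
      (starRingEnd ℂ) ((S j).eval z) ∂μ = a j := by
    rw [integral_sum_smul_eval_mul_conj hE hsupp]
    simp only [horth, mul_ite, mul_one, mul_zero, Finset.sum_ite_eq', Finset.mem_range, hj,
      if_true]
  have hnorm : ∫ z, ‖(S j).eval z‖ ^ 2 ∂μ = 1 := integral_norm_sq_eq_one (by simp [horth])
  rw [← hfourier, ← hnorm]
  exact norm_integral_eval_mul_conj_le hE hsupp _ _

end Orthonormal

section AsymptoticExponent

variable {E : Set ℂ} {S : ℕ → ℂ[X]}

lemma mkSeq_le_of_hasMarkovInequality (hdeg : ∀ n, (S n).natDegree = n) {k : ℕ} {r : ℝ}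
    (hr : 0 ≤ r) (h : HasMarkovInequality E k r) : mkSeq E S k ≤ r := by
  obtain ⟨M, hM, h⟩ := h
  refine growthExponent_le_of_eventually_le (L := M)
    (fun n => div_nonneg (supC_nonneg _ _) (supC_nonneg _ _)) hr ?_
  filter_upwards [eventually_ge_atTop 1] with n hn
  have hmarkov := h (S n) (by rwa [hdeg])
  rw [hdeg] at hmarkov
  exact div_le_of_le_mul₀ (supC_nonneg _ _) (by positivity) hmarkov

lemma mStarSeq_le_of_hasMarkovInequality (hdeg : ∀ n, (S n).natDegree = n) {s : ℝ} (hs : 0 ≤ s)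
    (h : HasMarkovInequality E 1 s) : mStarSeq E S ≤ s := by
  refine limsup_le_of_le (by isBoundedDefault) ?_
  filter_upwards [eventually_ne_atTop 0] with k hk
  exact (inv_natCast_mul_le_iff hk).2
    (mkSeq_le_of_hasMarkovInequality hdeg (by positivity) (h.mul_natCast hs k))

lemma eventually_supC_dIter_le_of_mkSeq_lt (hpos : ∀ n, 0 < supC E (S n)) {a : ℝ}
    (hgrowth : ∀ᶠ n : ℕ in atTop, supC E (S n) ≤ (n : ℝ) ^ a) {k : ℕ} {r : ℝ}
    (h : mkSeq E S k < r) : ∀ᶠ n : ℕ in atTop, supC E (dIter k (S n)) ≤ (n : ℝ) ^ (r + a) := by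
  have hratio := eventually_le_rpow_of_growthExponent_lt
    (fun n => div_nonneg (supC_nonneg E (dIter k (S n))) (hpos n).le) h
  filter_upwards [hratio, hgrowth, eventually_gt_atTop 0] with n hle ha hn
  calc supC E (dIter k (S n)) ≤ (n : ℝ) ^ r * supC E (S n) := (div_le_iff₀ (hpos n)).1 hle
    _ ≤ (n : ℝ) ^ r * (n : ℝ) ^ a := by gcongr
    _ = (n : ℝ) ^ (r + a) := (Real.rpow_add (by positivity) r a).symm

lemma exists_nonneg_supC_le_rpow
    (hα : growthExponent (fun n => supC E (S n)) < ⊤) :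
    ∃ a : ℝ, 0 ≤ a ∧ ∀ᶠ n : ℕ in atTop, supC E (S n) ≤ (n : ℝ) ^ a := by
  obtain ⟨a, ha, -⟩ := EReal.lt_iff_exists_real_btwn.1 hα
  refine ⟨max a 0, le_max_right _ _,
    eventually_le_rpow_of_growthExponent_lt (fun n => supC_nonneg E (S n)) (ha.trans_le ?_)⟩
  exact EReal.coe_le_coe_iff.2 (le_max_left _ _)

lemma HasBoundedCoeffs.hasMarkovInequality_of_mStarSeq_lt (h : HasBoundedCoeffs E S)
    (hE : Bornology.IsBounded E) (hdeg : ∀ n, (S n).natDegree = n)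
    (hα : growthExponent (fun n => supC E (S n)) < ⊤) {t : ℝ} (ht : 0 < t)
    (hlt : mStarSeq E S < t) : HasMarkovInequality E 1 t := by
  obtain ⟨a, ha0, ha⟩ := exists_nonneg_supC_le_rpow hα
  obtain ⟨r, hr0, hrt, hr⟩ : ∃ r : ℝ, 0 ≤ r ∧ r < t ∧ mStarSeq E S < r := by
    obtain ⟨r, hr, hrt⟩ := EReal.lt_iff_exists_real_btwn.1 hlt
    exact ⟨max r 0, le_max_right _ _, max_lt (EReal.coe_lt_coe_iff.1 hrt) ht,
      hr.trans_le (EReal.coe_le_coe_iff.2 (le_max_left _ _))⟩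
  have hlarge : ∀ᶠ k : ℕ in atTop, (a + 1) / (t - r) ≤ k :=
    tendsto_natCast_atTop_atTop.eventually_ge_atTop _
  obtain ⟨k, hkr, hk, hk0⟩ :=
    ((eventually_lt_of_limsup_lt hr).and (hlarge.and (eventually_ne_atTop 0))).exists
  rw [div_le_iff₀ (sub_pos.2 hrt)] at hk
  have hderiv := eventually_supC_dIter_le_of_mkSeq_lt h.supC_pos ha
    ((inv_natCast_mul_lt_iff hk0).1 hkr)
  exact ((h.hasMarkovInequality hE hdeg (by positivity) hderiv).mono
    (by linarith)).one_of_mul_natCast hE hk0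

lemma HasBoundedCoeffs.mStarSeq_nonneg (h : HasBoundedCoeffs E S)
    (hE : Bornology.IsBounded E) (hdeg : ∀ n, (S n).natDegree = n)
    (hα : growthExponent (fun n => supC E (S n)) < ⊤) : 0 ≤ mStarSeq E S := by
  by_contra! hneg
  have hhalf : HasMarkovInequality E 1 (1 / 2) :=
    h.hasMarkovInequality_of_mStarSeq_lt hE hdeg hα (by norm_num)
      (hneg.trans (by exact_mod_cast one_half_pos))
  have := hhalf.one_le hE h.nonempty
  norm_num at this

end AsymptoticExponent

theorem statement11_general {E : Set ℂ} (hE : Bornology.IsBounded E) {S : ℕ → ℂ[X]}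
    (hdeg : ∀ n, (S n).natDegree = n) (hS : HasBoundedCoeffs E S)
    (hα : growthExponent (fun n => supC E (S n)) < ⊤) :
    (mkPoly (supC E) 1 : EReal) = mStarSeq E S := by
  have hnonneg := hS.mStarSeq_nonneg hE hdeg hα
  refine coe_sInf_image_ofReal_eq hnonneg
    (fun s ⟨hs, hmarkov⟩ => mStarSeq_le_of_hasMarkovInequality hdeg hs.le hmarkov)
    fun t ht => ?_
  have ht0 : 0 < t := EReal.coe_pos.1 (hnonneg.trans_lt ht)
  exact ⟨ht0, hS.hasMarkovInequality_of_mStarSeq_lt hE hdeg hα ht0 ht⟩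

/-- Let `E ⊂ ℂ` be compact, `μ` a Borel probability measure supported in
`E`, and `(P̂_n)` an orthonormal (in `L²(μ)`) sequence of polynomials with `deg P̂_n = n`
such that `limsup_n log‖P̂_n‖_E / log n = α < ∞`. Then `m(E) = m*(𝒫̂)` in `[0,∞]`. -/
theorem statement11 (E : Set ℂ) (hE : IsCompact E) (hne : E.Nonempty)
    (μ : Measure ℂ) [IsProbabilityMeasure μ] (hsupp : μ Eᶜ = 0)
    (Phat : ℕ → Polynomial ℂ) (hdeg : ∀ n, (Phat n).natDegree = n)
    (horth : ∀ i j : ℕ,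
      ∫ z, (Phat i).eval z * (starRingEnd ℂ) ((Phat j).eval z) ∂μ =
        if i = j then 1 else 0)
    (hα : Filter.atTop.limsup
        (fun n : ℕ => ((Real.log (supC E (Phat n)) / Real.log n : ℝ) : EReal)) < ⊤) :
    (mkPoly (supC E) 1 : EReal) = mStarSeq E Phat :=
  statement11_general hE.isBounded hdeg
    (hasBoundedCoeffs_of_orthonormal hE.isBounded hsupp horth) hα
end

section
/- Let E ⊂ ℂ^N be a nonempty compact set, μ a Borel probability measure with support contained in E, and (P_α)_{α∈ℕ^N} a family of polynomials, orthonormal in L²(μ), with deg P_α = |α| and such that for every n the family (P_α)_{|α|≤n} spans the space of polynomials of total degree ≤ n. Suppose there are B > 0 and β ≥ 0 with ‖P_α‖_E ≤ B · max(|α|,1)^β for all α. Then for every polynomial P with deg P = n ≥ 1, ‖P‖_E ≤ binom(n+N, N) · B · n^β · ‖P‖_{L²(μ)}. -/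
/-!
Expand `P = ∑ c_α P_α` over the multi-indices `|α| ≤ n`. At a point of `E`, the Cauchy–Schwarz
inequality bounds `|P|` by `(∑ |P_α|²)^{1/2} (∑ |c_α|²)^{1/2}`. The second factor is `‖P‖_{L²(μ)}`
by Parseval, and the first is at most `binom(n+N, N)^{1/2} B n^β`, since there are `binom(n+N, N)`
such multi-indices. So the inequality even holds with the square root of the binomial coefficient.
-/

open MvPolynomial MeasureTheory

/-- The supremum norm `‖P‖_E = sup_{z ∈ E} |P(z)|` on polynomials in `N` variables. -/
noncomputable def supNorm {N : ℕ} (E : Set (Fin N → ℂ)) (P : MvPolynomial (Fin N) ℂ) : ℝ :=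
  ⨆ z : E, ‖MvPolynomial.eval (z : Fin N → ℂ) P‖

section MultiIndices

/-- The multi-indices `α ∈ ℕ^N` with `|α| ≤ n`, encoded by adding a slack coordinate `n - |α|` in
front: they are the tails of the multi-indices in `ℕ^(N+1)` of length exactly `n`. -/
def multiIndicesLE (N n : ℕ) : Finset (Fin N → ℕ) :=
  (Finset.univ.piAntidiag n : Finset (Fin (N + 1) → ℕ)).image Fin.tail

theorem mem_multiIndicesLE {N n : ℕ} {α : Fin N → ℕ} :
    α ∈ multiIndicesLE N n ↔ ∑ j, α j ≤ n := by
  simp only [multiIndicesLE, Finset.mem_image, Finset.mem_piAntidiag, Finset.mem_univ,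
    implies_true, and_true, Fin.sum_univ_succ]
  constructor
  · rintro ⟨a, ha, rfl⟩
    exact (Nat.le_add_left _ _).trans_eq ha
  · intro hα
    exact ⟨Fin.cons (n - ∑ j, α j) α, by simpa using Nat.sub_add_cancel hα, Fin.tail_cons _ _⟩

theorem coe_multiIndicesLE (N n : ℕ) :
    (multiIndicesLE N n : Set (Fin N → ℕ)) = {α | ∑ j, α j ≤ n} :=
  Set.ext fun _ => mem_multiIndicesLE

theorem card_multiIndicesLE (N n : ℕ) : (multiIndicesLE N n).card = (n + N).choose N := by
  have tail_injOn : Set.InjOn Fin.tail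
      ((Finset.univ.piAntidiag n : Finset (Fin (N + 1) → ℕ)) : Set (Fin (N + 1) → ℕ)) := by
    intro a ha b hb hab
    simp only [Finset.mem_coe, Finset.mem_piAntidiag, Fin.sum_univ_succ] at ha hb
    have tail_eq (j : Fin N) : a j.succ = b j.succ := congrFun hab j
    have head_eq : a 0 = b 0 := by
      simp only [tail_eq] at ha
      omega
    exact funext (Fin.cases head_eq tail_eq)
  rw [multiIndicesLE, Finset.card_image_of_injOn tail_injOn,
    ← Finset.map_sym_eq_piAntidiag, Finset.card_map, Finset.sym_univ, Finset.card_univ,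
    Sym.card_sym_eq_choose, Fintype.card_fin, Nat.add_right_comm, Nat.add_sub_cancel,
    Nat.add_comm N n, Nat.choose_symm_add]

end MultiIndices

section OrthonormalSums

theorem norm_sum_mul_le_sqrt_mul_sqrt {ι R : Type*} [NonUnitalSeminormedRing R]
    (s : Finset ι) (a b : ι → R) :
    ‖∑ i ∈ s, a i * b i‖ ≤ √(∑ i ∈ s, ‖a i‖ ^ 2) * √(∑ i ∈ s, ‖b i‖ ^ 2) :=
  calc ‖∑ i ∈ s, a i * b i‖ ≤ ∑ i ∈ s, ‖a i‖ * ‖b i‖ :=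
        norm_sum_le_of_le s fun i _ => norm_mul_le (a i) (b i)
    _ ≤ _ := Real.sum_mul_le_sqrt_mul_sqrt s _ _

variable {X ι 𝕜 : Type*} [MeasurableSpace X] [DecidableEq ι] [RCLike 𝕜]
  {μ : Measure X} {f : ι → X → 𝕜}

theorem integral_norm_sq_sum_of_orthonormal (hf : ∀ i, MemLp (f i) 2 μ)
    (horth : ∀ i j, ∫ x, f i x * starRingEnd 𝕜 (f j x) ∂μ = if i = j then 1 else 0)
    (s : Finset ι) (c : ι → 𝕜) :
    ∫ x, ‖∑ i ∈ s, c i * f i x‖ ^ 2 ∂μ = ∑ i ∈ s, ‖c i‖ ^ 2 := by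
  have integrable_term (i j : ι) : Integrable
      (fun x => c i * starRingEnd 𝕜 (c j) * (f i x * starRingEnd 𝕜 (f j x))) μ :=
    ((hf i).integrable_mul (hf j).star).const_mul _
  have norm_sq_eq (x : X) : ((‖∑ i ∈ s, c i * f i x‖ ^ 2 : ℝ) : 𝕜) =
      ∑ i ∈ s, ∑ j ∈ s, c i * starRingEnd 𝕜 (c j) * (f i x * starRingEnd 𝕜 (f j x)) := by
    rw [RCLike.ofReal_pow, ← RCLike.mul_conj, map_sum, Finset.sum_mul_sum]
    simp only [map_mul, mul_mul_mul_comm]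
  apply RCLike.ofReal_injective (K := 𝕜)
  calc ((∫ x, ‖∑ i ∈ s, c i * f i x‖ ^ 2 ∂μ : ℝ) : 𝕜)
      = ∫ x, ∑ i ∈ s, ∑ j ∈ s,
          c i * starRingEnd 𝕜 (c j) * (f i x * starRingEnd 𝕜 (f j x)) ∂μ := by
        simp only [← integral_ofReal, norm_sq_eq]
    _ = ∑ i ∈ s, ∑ j ∈ s, c i * starRingEnd 𝕜 (c j) * if i = j then 1 else 0 := by
        rw [integral_finsetSum _ fun i _ => integrable_finsetSum _ fun j _ => integrable_term i j]
        simp only [integral_finsetSum _ fun j _ => integrable_term _ j, integral_const_mul, horth]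
    _ = ((∑ i ∈ s, ‖c i‖ ^ 2 : ℝ) : 𝕜) := by
        simp +contextual [RCLike.mul_conj]

theorem norm_sum_le_sqrt_card_mul_of_orthonormal (hf : ∀ i, MemLp (f i) 2 μ)
    (horth : ∀ i j, ∫ x, f i x * starRingEnd 𝕜 (f j x) ∂μ = if i = j then 1 else 0)
    (s : Finset ι) (c : ι → 𝕜) {x : X} {M : ℝ} (hM : 0 ≤ M) (hx : ∀ i ∈ s, ‖f i x‖ ≤ M) :
    ‖∑ i ∈ s, c i * f i x‖ ≤ √s.card * M * √(∫ y, ‖∑ i ∈ s, c i * f i y‖ ^ 2 ∂μ) := by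
  have sum_sq_le : ∑ i ∈ s, ‖f i x‖ ^ 2 ≤ s.card * M ^ 2 := by
    rw [← nsmul_eq_mul]
    exact Finset.sum_le_card_nsmul _ _ _ fun i hi => by gcongr; exact hx i hi
  calc ‖∑ i ∈ s, c i * f i x‖
      ≤ √(∑ i ∈ s, ‖c i‖ ^ 2) * √(∑ i ∈ s, ‖f i x‖ ^ 2) := norm_sum_mul_le_sqrt_mul_sqrt s c _
    _ ≤ √(∑ i ∈ s, ‖c i‖ ^ 2) * √(s.card * M ^ 2) := by gcongr
    _ = √s.card * M * √(∫ y, ‖∑ i ∈ s, c i * f i y‖ ^ 2 ∂μ) := by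
        rw [integral_norm_sq_sum_of_orthonormal hf horth, Real.sqrt_mul (Nat.cast_nonneg _),
          Real.sqrt_sq hM, mul_comm]

end OrthonormalSums

section BoundedSets

theorem exists_norm_le_of_continuous_of_isBounded {X F : Type*} [PseudoMetricSpace X]
    [ProperSpace X] [SeminormedAddGroup F] {E : Set X} (hE : Bornology.IsBounded E) {f : X → F}
    (hf : Continuous f) : ∃ C, ∀ x ∈ E, ‖f x‖ ≤ C :=
  let ⟨C, hC⟩ := hE.isCompact_closure.exists_bound_of_continuousOn hf.continuousOn
  ⟨C, fun x hx => hC x (subset_closure hx)⟩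

theorem memLp_of_continuous_of_isBounded {X F : Type*} [PseudoMetricSpace X] [ProperSpace X]
    [MeasurableSpace X] [OpensMeasurableSpace X] [NormedAddCommGroup F]
    {E : Set X} (hE : Bornology.IsBounded E) {μ : Measure X} [IsFiniteMeasure μ]
    (hμE : μ Eᶜ = 0) {f : X → F} (hf : Continuous f) (p : ENNReal) : MemLp f p μ := by
  obtain ⟨C, hC⟩ := exists_norm_le_of_continuous_of_isBounded hE hf
  have ae_mem : ∀ᵐ x ∂μ, x ∈ E := hμE
  exact MemLp.of_bound hf.aestronglyMeasurable C (ae_mem.mono hC)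

variable {N : ℕ} {E : Set (Fin N → ℂ)}

theorem norm_eval_le_supNorm (hE : Bornology.IsBounded E) (P : MvPolynomial (Fin N) ℂ)
    {z : Fin N → ℂ} (hz : z ∈ E) : ‖eval z P‖ ≤ supNorm E P := by
  obtain ⟨C, hC⟩ := exists_norm_le_of_continuous_of_isBounded hE (continuous_eval P)
  have bddAbove : BddAbove (Set.range fun w : E => ‖eval (w : Fin N → ℂ) P‖) :=
    ⟨C, Set.forall_mem_range.2 fun w => hC w w.2⟩
  exact le_ciSup bddAbove ⟨z, hz⟩

theorem supNorm_le (hne : E.Nonempty) {P : MvPolynomial (Fin N) ℂ} {C : ℝ}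
    (hC : ∀ z ∈ E, ‖eval z P‖ ≤ C) : supNorm E P ≤ C :=
  have : Nonempty E := hne.to_subtype
  ciSup_le fun z => hC z z.2

theorem supNorm_le_of_mem_span_orthonormal {ι : Type*} [DecidableEq ι]
    (hE : Bornology.IsBounded E) (hne : E.Nonempty)
    {μ : Measure (Fin N → ℂ)} [IsFiniteMeasure μ] (hμE : μ Eᶜ = 0)
    {Q : ι → MvPolynomial (Fin N) ℂ}
    (horth : ∀ i j, ∫ z, eval z (Q i) * starRingEnd ℂ (eval z (Q j)) ∂μ = if i = j then 1 else 0)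
    {s : Finset ι} {M : ℝ} (hM : 0 ≤ M) (hQ : ∀ i ∈ s, supNorm E (Q i) ≤ M)
    {P : MvPolynomial (Fin N) ℂ} (hP : P ∈ Submodule.span ℂ (Q '' s)) :
    supNorm E P ≤ √s.card * M * √(∫ z, ‖eval z P‖ ^ 2 ∂μ) := by
  obtain ⟨c, rfl⟩ := Submodule.mem_span_image_finset_iff_exists_fun' ℂ |>.1 hP
  have memLp_eval (i : ι) : MemLp (fun z => eval z (Q i)) 2 μ :=
    memLp_of_continuous_of_isBounded hE hμE (continuous_eval (Q i)) 2
  refine supNorm_le hne fun z hz => ?_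
  simp only [map_sum, smul_eval]
  exact norm_sum_le_sqrt_card_mul_of_orthonormal memLp_eval horth s c hM fun i hi =>
    (norm_eval_le_supNorm hE (Q i) hz).trans (hQ i hi)

end BoundedSets

theorem statement13_general {N : ℕ} {E : Set (Fin N → ℂ)} (hE : Bornology.IsBounded E)
    (hne : E.Nonempty) {μ : Measure (Fin N → ℂ)} [IsFiniteMeasure μ] (hsupp : μ Eᶜ = 0)
    {Pfam : (Fin N → ℕ) → MvPolynomial (Fin N) ℂ}
    (horth : ∀ α γ : Fin N → ℕ,
      ∫ z, eval z (Pfam α) * starRingEnd ℂ (eval z (Pfam γ)) ∂μ = if α = γ then 1 else 0)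
    (hspan : ∀ (n : ℕ) (Q : MvPolynomial (Fin N) ℂ), Q.totalDegree ≤ n →
      Q ∈ Submodule.span ℂ (Pfam '' {α : Fin N → ℕ | ∑ j, α j ≤ n}))
    {B β : ℝ} (hB : 0 ≤ B) (hβ : 0 ≤ β)
    (hbound : ∀ α : Fin N → ℕ,
      supNorm E (Pfam α) ≤ B * ((max (∑ j, α j) 1 : ℕ) : ℝ) ^ β)
    {n : ℕ} (hn : 1 ≤ n) {P : MvPolynomial (Fin N) ℂ} (hP : P.totalDegree ≤ n) :
    supNorm E P ≤
      √((n + N).choose N : ℝ) * (B * (n : ℝ) ^ β) * √(∫ z, ‖eval z P‖ ^ 2 ∂μ) := by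
  have supNorm_basis_le : ∀ α ∈ multiIndicesLE N n, supNorm E (Pfam α) ≤ B * (n : ℝ) ^ β := by
    intro α hα
    have max_le_n : max (∑ j, α j) 1 ≤ n := max_le (mem_multiIndicesLE.1 hα) hn
    exact (hbound α).trans (by gcongr)
  rw [← card_multiIndicesLE]
  refine supNorm_le_of_mem_span_orthonormal hE hne hsupp horth (by positivity) supNorm_basis_le ?_
  rw [coe_multiIndicesLE]
  exact hspan n P hP

/-- Let `E ⊂ ℂ^N` be nonempty compact, `μ` a Borel probability measure
supported in `E`, and `(P_α)` an orthonormal family in `L²(μ)` with `deg P_α = |α|` spanning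
the polynomials of degree `≤ n` for every `n`. If `‖P_α‖_E ≤ B max(|α|,1)^β`, then every
polynomial `P` with `deg P = n ≥ 1` satisfies
`‖P‖_E ≤ binom(n+N, N) B n^β ‖P‖_{L²(μ)}`. -/
theorem statement13 {N : ℕ} (E : Set (Fin N → ℂ)) (hE : IsCompact E) (hne : E.Nonempty)
    (μ : Measure (Fin N → ℂ)) [IsProbabilityMeasure μ] (hsupp : μ Eᶜ = 0)
    (Pfam : (Fin N → ℕ) → MvPolynomial (Fin N) ℂ)
    (hdeg : ∀ α : Fin N → ℕ, (Pfam α).totalDegree = ∑ j, α j)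
    (horth : ∀ α γ : Fin N → ℕ,
      ∫ z, MvPolynomial.eval z (Pfam α) * (starRingEnd ℂ) (MvPolynomial.eval z (Pfam γ)) ∂μ =
        if α = γ then 1 else 0)
    (hspan : ∀ (n : ℕ) (Q : MvPolynomial (Fin N) ℂ), Q.totalDegree ≤ n →
      Q ∈ Submodule.span ℂ (Pfam '' {α : Fin N → ℕ | ∑ j, α j ≤ n}))
    (B β : ℝ) (hB : 0 < B) (hβ : 0 ≤ β)
    (hbound : ∀ α : Fin N → ℕ,
      supNorm E (Pfam α) ≤ B * ((max (∑ j, α j) 1 : ℕ) : ℝ) ^ β) :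
    ∀ n : ℕ, 1 ≤ n → ∀ P : MvPolynomial (Fin N) ℂ, P.totalDegree = n →
      supNorm E P ≤ ((n + N).choose N : ℝ) * B * (n : ℝ) ^ β *
        (∫ z, ‖MvPolynomial.eval z P‖ ^ 2 ∂μ) ^ ((1 : ℝ) / 2) := by
  intro n hn P hP
  rw [← Real.sqrt_eq_rpow, mul_assoc _ B]
  have one_le_choose : (1 : ℝ) ≤ (n + N).choose N :=
    Nat.one_le_cast.2 (Nat.choose_pos (Nat.le_add_left N n))
  refine (statement13_general hE.isBounded hne hsupp horth hspan hB.le hβ hbound hn hP.le).trans ?_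
  gcongr
  exact Real.sqrt_le_self_iff.2 (.inr one_le_choose)
end

section
/- Let q be a spectral norm on ℙ(ℂ^N) (i.e., q(P^n) = q(P)^n for all polynomials P and all n ≥ 1), and suppose there exist M > 0 and m ≥ 0 such that q(∂P/∂x_j) ≤ M (deg P)^m q(P) for every j ∈ {1,…,N} and every polynomial P with deg P ≥ 1. Then m ≥ 1. -/
open MvPolynomial

/-- `q` is a norm on the complex vector space `ℙ(ℂ^N)` of polynomials. -/
structure IsPolyNorm {N : ℕ} (q : MvPolynomial (Fin N) ℂ → ℝ) : Prop where
  nonneg : ∀ P, 0 ≤ q P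
  definite : ∀ P, q P = 0 → P = 0
  triangle : ∀ P Q, q (P + Q) ≤ q P + q Q
  homog : ∀ (c : ℂ) (P), q (c • P) = ‖c‖ * q P

/-!
Differentiating `x ^ n` gains a factor `n`, while Markov's inequality costs a factor `M * n ^ m`.
Iterating down from `x ^ n` to `1` shows that `q (x ^ n)` is at least
`q 1 * (n !) ^ (1 - m) / M ^ n`. When `m < 1` this outgrows every geometric sequence, whereas a
spectral norm has `q (x ^ n) = q x ^ n`.
-/

open Filter Topology
open scoped Nat

/-- Markov's inequality with constant `M` and exponent `m` in the single direction `i`, for a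
function `q` measuring the size of polynomials. Constants are excluded, so `0 ^ m` never occurs. -/
def MarkovInequality {σ R : Type*} [CommSemiring R] (q : MvPolynomial σ R → ℝ) (i : σ)
    (M m : ℝ) : Prop :=
  ∀ P : MvPolynomial σ R, 1 ≤ P.totalDegree →
    q (pderiv i P) ≤ M * (P.totalDegree : ℝ) ^ m * q P

theorem tendsto_pow_div_factorial_rpow_atTop (c : ℝ) {s : ℝ} (hs : 0 < s) :
    Tendsto (fun n : ℕ ↦ c ^ n / (n ! : ℝ) ^ s) atTop (𝓝 0) := by
  have hroot : Tendsto (fun n : ℕ ↦ ((|c| ^ s⁻¹) ^ n / (n ! : ℝ)) ^ s) atTop (𝓝 0) := by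
    simpa only [Real.zero_rpow hs.ne'] using
      (FloorSemiring.tendsto_pow_div_factorial_atTop (|c| ^ s⁻¹)).rpow_const (Or.inr hs.le)
  refine squeeze_zero_norm (fun n ↦ le_of_eq ?_) hroot
  rw [Real.div_rpow (by positivity) (by positivity), ← Real.rpow_pow_comm (by positivity),
    Real.rpow_inv_rpow (by positivity) hs.ne', norm_div, norm_pow, Real.norm_eq_abs,
    Real.norm_of_nonneg (by positivity)]

theorem pderiv_X_pow_succ_self {σ R : Type*} [CommSemiring R] (i : σ) (n : ℕ) :
    pderiv i (X i ^ (n + 1) : MvPolynomial σ R) = (n + 1) • X i ^ n := by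
  rw [pderiv_pow, pderiv_X_self, mul_one, Nat.add_sub_cancel, nsmul_eq_mul]

section Markov

variable {σ R : Type*} [CommSemiring R] [Nontrivial R] {q : MvPolynomial σ R → ℝ} {i : σ}
  {M m : ℝ}

theorem MarkovInequality.rpow_mul_apply_X_pow_le (hmarkov : MarkovInequality q i M m)
    (hnsmul : ∀ (n : ℕ) P, q (n • P) = n * q P) (n : ℕ) :
    ((n + 1 : ℕ) : ℝ) ^ (1 - m) * q (X i ^ n) ≤ M * q (X i ^ (n + 1)) := by
  have hpos : (0 : ℝ) < (n + 1 : ℕ) := by positivity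
  have hderiv := hmarkov (X i ^ (n + 1)) (by rw [totalDegree_X_pow]; lia)
  rw [totalDegree_X_pow, pderiv_X_pow_succ_self, hnsmul] at hderiv
  rw [Real.rpow_sub hpos, Real.rpow_one, div_mul_eq_mul_div, div_le_iff₀ (by positivity)]
  linarith

theorem MarkovInequality.factorial_rpow_mul_apply_one_le (hmarkov : MarkovInequality q i M m)
    (hnsmul : ∀ (n : ℕ) P, q (n • P) = n * q P) (hM : 0 ≤ M) (n : ℕ) :
    (n ! : ℝ) ^ (1 - m) * q 1 ≤ M ^ n * q (X i ^ n) := by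
  induction n with
  | zero => simp
  | succ n ih =>
    calc ((n + 1)! : ℝ) ^ (1 - m) * q 1
        = ((n + 1 : ℕ) : ℝ) ^ (1 - m) * ((n ! : ℝ) ^ (1 - m) * q 1) := by
          rw [Nat.factorial_succ, Nat.cast_mul, Real.mul_rpow (by positivity) (by positivity),
            mul_assoc]
      _ ≤ ((n + 1 : ℕ) : ℝ) ^ (1 - m) * (M ^ n * q (X i ^ n)) := by gcongr
      _ = M ^ n * (((n + 1 : ℕ) : ℝ) ^ (1 - m) * q (X i ^ n)) := mul_left_comm _ _ _
      _ ≤ M ^ n * (M * q (X i ^ (n + 1))) :=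
          mul_le_mul_of_nonneg_left (hmarkov.rpow_mul_apply_X_pow_le hnsmul n) (by positivity)
      _ = M ^ (n + 1) * q (X i ^ (n + 1)) := by rw [pow_succ M, mul_assoc]

theorem statement15_general (hmarkov : MarkovInequality q i M m)
    (hnsmul : ∀ (n : ℕ) P, q (n • P) = n * q P) (hone : 0 < q 1) (hM : 0 ≤ M) {C : ℝ}
    (hgrowth : ∀ n : ℕ, 1 ≤ n → q (X i ^ n) ≤ C ^ n) :
    1 ≤ m := by
  by_contra! hm
  have hbound : ∀ᶠ n : ℕ in atTop, q 1 ≤ (M * C) ^ n / (n ! : ℝ) ^ (1 - m) := by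
    filter_upwards [eventually_ge_atTop 1] with n hn
    rw [le_div_iff₀' (by positivity)]
    calc (n ! : ℝ) ^ (1 - m) * q 1
        ≤ M ^ n * q (X i ^ n) := hmarkov.factorial_rpow_mul_apply_one_le hnsmul hM n
      _ ≤ M ^ n * C ^ n := by
          gcongr
          exact hgrowth n hn
      _ = (M * C) ^ n := (mul_pow M C n).symm
  have hlim := tendsto_pow_div_factorial_rpow_atTop (M * C) (sub_pos.mpr hm)
  exact hone.not_ge (ge_of_tendsto hlim hbound)

end Markov

namespace IsPolyNorm

variable {N : ℕ} {q : MvPolynomial (Fin N) ℂ → ℝ}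

theorem pos_of_ne_zero (hq : IsPolyNorm q) {P : MvPolynomial (Fin N) ℂ} (hP : P ≠ 0) :
    0 < q P :=
  (hq.nonneg P).lt_of_ne' fun hzero ↦ hP (hq.definite P hzero)

theorem map_nsmul (hq : IsPolyNorm q) (n : ℕ) (P : MvPolynomial (Fin N) ℂ) :
    q (n • P) = n * q P := by
  rw [← Nat.cast_smul_eq_nsmul ℂ, hq.homog, Complex.norm_natCast]

end IsPolyNorm

/-- Let `q` be a spectral norm on `ℙ(ℂ^N)` satisfying Markov's inequality
`q(∂P/∂x_j) ≤ M (deg P)^m q(P)` for every `j` and every `P` with `deg P ≥ 1`. Then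
`m ≥ 1`. -/
theorem statement15 {N : ℕ} (hN : 0 < N) (q : MvPolynomial (Fin N) ℂ → ℝ)
    (hq : IsPolyNorm q)
    (hspec : ∀ (P : MvPolynomial (Fin N) ℂ) (n : ℕ), 1 ≤ n → q (P ^ n) = q P ^ n)
    (M m : ℝ) (hM : 0 < M) (hm : 0 ≤ m)
    (hmar : ∀ (j : Fin N) (P : MvPolynomial (Fin N) ℂ), 1 ≤ P.totalDegree →
      q (MvPolynomial.pderiv j P) ≤ M * (P.totalDegree : ℝ) ^ m * q P) :
    1 ≤ m :=
  statement15_general (hmar ⟨0, hN⟩) hq.map_nsmul (hq.pos_of_ne_zero one_ne_zero) hM.le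
    fun n hn ↦ (hspec (X ⟨0, hN⟩) n hn).le
end

section
/- For every real polynomial P of degree n ≥ 1, sup_{x∈[−1,1]} √(1−x²)·|P′(x)| ≤ n(n+1) · sup_{x∈[−1,1]} √(1−x²)·|P(x)|; that is, Markov's inequality holds for Schur's norm ‖P‖ = sup_{x∈[−1,1]} √(1−x²)|P(x)| with constant factor n(n+1) (exponent 2). -/
open Polynomial

/-!
If `f` has simple roots, all real, and `|Q| ≤ K |f'|` at each of them, then `|Q| ≤ K |f'|` to the
right of all the roots: compare the partial fractions `Q / f = ∑ Q(r) / f'(r) / (x - r)` and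
`f' / f = ∑ 1 / (x - r)` term by term. For the Chebyshev polynomial `f = Tₙ` this is Schur's
inequality at the endpoint `1`, because `√(1 - r²) |Tₙ'(r)| = n` at the roots `r` and
`Tₙ'(1) = n²`. The other points of `[-1, 1]` follow by rescaling the variable. Bernstein's
inequality at `cos φ` is the endpoint case again, applied to the polynomial `Q` with
`P(cos(φ + t)) - P(cos(φ - t)) = 2 sin t Q(cos t)`, for which differentiation at `t = 0` gives
`Q(1) = -sin φ P'(cos φ)`. The theorem is Bernstein's inequality followed by Schur's.
-/

section PartialFractions

variable {F : Type*} [Field F] {f Q : F[X]}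

theorem eq_C_leadingCoeff_mul_nodal_roots [DecidableEq F] (hf : f.Splits) (hsep : f.Separable) :
    f = C f.leadingCoeff * Lagrange.nodal f.roots.toFinset id := by
  conv_lhs => rw [hf.eq_prod_roots]
  rw [Lagrange.nodal, Finset.prod_eq_multiset_prod, Multiset.toFinset_val,
    (nodup_roots hsep).dedup]
  rfl

theorem eval_derivative_ne_zero_of_mem_roots (hsep : f.Separable) {r : F} (hr : r ∈ f.roots) :
    f.derivative.eval r ≠ 0 :=
  hsep.eval₂_derivative_ne_zero (RingHom.id F) (isRoot_of_mem_roots hr)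

theorem nodalWeight_roots_eq_leadingCoeff_div [DecidableEq F] (hf : f.Splits) (hsep : f.Separable)
    {r : F} (hr : r ∈ f.roots) :
    Lagrange.nodalWeight f.roots.toFinset id r = f.leadingCoeff / f.derivative.eval r := by
  have hderiv : f.derivative.eval r =
      f.leadingCoeff * (Lagrange.nodal f.roots.toFinset id).derivative.eval r := by
    rw [← eval_C_mul, ← derivative_C_mul, ← eq_C_leadingCoeff_mul_nodal_roots hf hsep]
  rw [Lagrange.nodalWeight_eq_eval_derivative_nodal (Multiset.mem_toFinset.mpr hr), hderiv,
    div_mul_cancel_left₀ (leadingCoeff_ne_zero.mpr hsep.ne_zero)]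
  rfl

theorem eval_div_eval_eq_sum_roots [DecidableEq F] (hf : f.Splits) (hsep : f.Separable)
    (hQ : Q.degree < f.degree) {x : F} (hx : f.eval x ≠ 0) :
    Q.eval x / f.eval x =
      ∑ r ∈ f.roots.toFinset, Q.eval r / f.derivative.eval r / (x - r) := by
  have hcard : Q.degree < f.roots.toFinset.card := by
    rwa [Multiset.toFinset_card_of_nodup (nodup_roots hsep), ← hf.natDegree_eq_card_roots,
      ← degree_eq_natDegree hsep.ne_zero]
  have hroot_ne : ∀ r ∈ f.roots.toFinset, x ≠ id r := by
    rintro r hr rfl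
    exact hx (isRoot_of_mem_roots (Multiset.mem_toFinset.mp hr))
  have hfx : f.eval x = f.leadingCoeff * (Lagrange.nodal f.roots.toFinset id).eval x := by
    rw [← eval_C_mul, ← eq_C_leadingCoeff_mul_nodal_roots hf hsep]
  have hinterp : Q.eval x = (Lagrange.nodal f.roots.toFinset id).eval x *
      ∑ r ∈ f.roots.toFinset,
        Lagrange.nodalWeight f.roots.toFinset id r * (x - r)⁻¹ * Q.eval r := by
    conv_lhs => rw [Lagrange.eq_interpolate Function.injective_id.injOn hcard,
      Lagrange.eval_interpolate_not_at_node _ hroot_ne]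
    rfl
  rw [div_eq_iff hx, hinterp, hfx, Finset.mul_sum, Finset.sum_mul]
  refine Finset.sum_congr rfl fun r hr ↦ ?_
  rw [nodalWeight_roots_eq_leadingCoeff_div hf hsep (Multiset.mem_toFinset.mp hr)]
  ring

theorem eval_derivative_div_eval_eq_sum_roots [DecidableEq F] (hf : f.Splits) (hsep : f.Separable)
    {x : F} (hx : f.eval x ≠ 0) :
    f.derivative.eval x / f.eval x = ∑ r ∈ f.roots.toFinset, 1 / (x - r) := by
  rw [hf.eval_derivative_div_eval_of_ne_zero hx, Finset.sum_eq_multiset_sum,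
    Multiset.toFinset_val, (nodup_roots hsep).dedup]

theorem abs_eval_le_of_abs_eval_roots_le [LinearOrder F] [IsStrictOrderedRing F] (hf : f.Splits)
    (hsep : f.Separable) (hQ : Q.degree < f.degree) {K x : F} (hx : ∀ r ∈ f.roots, r < x)
    (hK : ∀ r ∈ f.roots, |Q.eval r| ≤ K * |f.derivative.eval r|) :
    |Q.eval x| ≤ K * |f.derivative.eval x| := by
  have hfx : f.eval x ≠ 0 := fun h ↦ (hx x ((mem_roots hsep.ne_zero).mpr h)).false
  have hpos : ∀ r ∈ f.roots.toFinset, 0 < x - r := fun r hr ↦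
    sub_pos.mpr (hx r (Multiset.mem_toFinset.mp hr))
  have hcoeff : ∀ r ∈ f.roots.toFinset, |Q.eval r / f.derivative.eval r| ≤ K := by
    intro r hr
    rw [Multiset.mem_toFinset] at hr
    rw [abs_div, div_le_iff₀ (abs_pos.mpr (eval_derivative_ne_zero_of_mem_roots hsep hr))]
    exact hK r hr
  have hratio : |Q.eval x / f.eval x| ≤ K * |f.derivative.eval x / f.eval x| := calc
    |Q.eval x / f.eval x|
        ≤ ∑ r ∈ f.roots.toFinset, |Q.eval r / f.derivative.eval r / (x - r)| := by
        rw [eval_div_eval_eq_sum_roots hf hsep hQ hfx]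
        exact Finset.abs_sum_le_sum_abs _ _
    _ ≤ ∑ r ∈ f.roots.toFinset, K * (1 / (x - r)) := by
        refine Finset.sum_le_sum fun r hr ↦ ?_
        rw [abs_div, abs_of_pos (hpos r hr), mul_one_div]
        exact div_le_div_of_nonneg_right (hcoeff r hr) (hpos r hr).le
    _ = K * |f.derivative.eval x / f.eval x| := by
        rw [← Finset.mul_sum, eval_derivative_div_eval_eq_sum_roots hf hsep hfx, abs_of_nonneg]
        exact Finset.sum_nonneg fun r hr ↦ one_div_nonneg.mpr (hpos r hr).le
  rwa [abs_div, abs_div, ← mul_div_assoc, div_le_div_iff_of_pos_right (abs_pos.mpr hfx)] at hratio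

end PartialFractions

open Polynomial.Chebyshev hiding C S

section ChebyshevRoots

theorem card_roots_T_real (n : ℕ) : (T ℝ n).roots.card = n := by
  have hinj := (Finset.range n).nodup_map_iff_injOn.mp (roots_T_real_nodup n)
  rw [roots_T_real, Finset.card_val, Finset.card_image_of_injOn hinj, Finset.card_range]

theorem splits_T_real (n : ℕ) : (T ℝ n).Splits := by
  rw [splits_iff_card_roots, card_roots_T_real, natDegree_T, Int.natAbs_natCast]

theorem separable_T_real (n : ℕ) : (T ℝ n).Separable := by
  rw [← nodup_roots_iff_of_splits (T_ne_zero ℝ n) (splits_T_real n), roots_T_real]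
  exact Finset.nodup _

theorem abs_lt_one_of_mem_roots_T_real {n : ℕ} {r : ℝ} (hr : r ∈ (T ℝ n).roots) : |r| < 1 := by
  by_contra! h
  have := one_le_abs_eval_T_real n h
  rw [isRoot_of_mem_roots hr] at this
  norm_num at this

theorem eval_derivative_T_real_cos_mul_sin (n : ℕ) (θ : ℝ) :
    (T ℝ n).derivative.eval (Real.cos θ) * Real.sin θ = n * Real.sin (n * θ) := by
  rw [T_derivative_eq_U, eval_mul, mul_assoc, U_real_cos]
  simp

theorem sqrt_one_sub_sq_mul_abs_eval_derivative_T_real {n : ℕ} {r : ℝ} (hr : r ∈ (T ℝ n).roots) :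
    √(1 - r ^ 2) * |(T ℝ n).derivative.eval r| = n := by
  obtain ⟨hr₁, hr₂⟩ := abs_lt.mp (abs_lt_one_of_mem_roots_T_real hr)
  obtain ⟨θ, rfl⟩ : ∃ θ, Real.cos θ = r := ⟨_, Real.cos_arccos hr₁.le hr₂.le⟩
  have hcos : Real.cos (n * θ) = 0 := by
    rw [← Int.cast_natCast, ← T_real_cos, isRoot_of_mem_roots hr]
  have hsin : |Real.sin (n * θ)| = 1 := by
    rw [Real.abs_sin_eq_sqrt_one_sub_cos_sq, hcos]
    norm_num
  rw [← Real.abs_sin_eq_sqrt_one_sub_cos_sq, mul_comm, ← abs_mul,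
    eval_derivative_T_real_cos_mul_sin, abs_mul, hsin, mul_one, Nat.abs_cast]

end ChebyshevRoots

section SchurInequality

theorem abs_eval_one_le_of_sqrt_one_sub_sq_mul_abs_eval_le {Q : ℝ[X]} {n : ℕ} {M : ℝ}
    (hQ : Q.degree < n)
    (hM : ∀ x ∈ Set.Icc (-1 : ℝ) 1, √(1 - x ^ 2) * |Q.eval x| ≤ M) :
    |Q.eval 1| ≤ n * M := by
  rcases n.eq_zero_or_pos with rfl | hn
  · have hQ₀ : Q = 0 := by simpa using hQ
    simp [hQ₀]
  have hn' : (0 : ℝ) < n := Nat.cast_pos.mpr hn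
  have hroot_lt {r : ℝ} (hr : r ∈ (T ℝ n).roots) := abs_lt.mp (abs_lt_one_of_mem_roots_T_real hr)
  have hnodes : ∀ r ∈ (T ℝ n).roots, |Q.eval r| ≤ M / n * |(T ℝ n).derivative.eval r| := by
    intro r hr
    have hpos : 0 < √(1 - r ^ 2) := by
      rw [Real.sqrt_pos, sub_pos, sq_lt_one_iff_abs_lt_one]
      exact abs_lt_one_of_mem_roots_T_real hr
    refine le_of_mul_le_mul_left ?_ hpos
    rw [mul_left_comm, sqrt_one_sub_sq_mul_abs_eval_derivative_T_real hr,
      div_mul_cancel₀ _ hn'.ne']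
    exact hM r ⟨(hroot_lt hr).1.le, (hroot_lt hr).2.le⟩
  calc |Q.eval 1|
      ≤ M / n * |(T ℝ n).derivative.eval 1| :=
        abs_eval_le_of_abs_eval_roots_le (splits_T_real n) (separable_T_real n)
          (by rwa [degree_T, Int.natAbs_natCast]) (fun r hr ↦ (hroot_lt hr).2) hnodes
    _ = n * M := by
        rw [derivative_T_eval_one, Int.cast_natCast, abs_of_nonneg (by positivity)]
        field_simp

theorem degree_comp_C_mul_X_le {R : Type*} [CommSemiring R] (Q : R[X]) (a : R) :
    (Q.comp (C a * X)).degree ≤ Q.degree := by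
  refine degree_le_iff_coeff_zero _ _ |>.mpr fun m hm ↦ ?_
  rw [comp_C_mul_X_coeff, coeff_eq_zero_of_degree_lt hm, zero_mul]

theorem abs_eval_le_of_sqrt_one_sub_sq_mul_abs_eval_le {Q : ℝ[X]} {n : ℕ} {M : ℝ}
    (hQ : Q.degree < n)
    (hM : ∀ x ∈ Set.Icc (-1 : ℝ) 1, √(1 - x ^ 2) * |Q.eval x| ≤ M) :
    ∀ x ∈ Set.Icc (-1 : ℝ) 1, |Q.eval x| ≤ n * M := by
  intro x hx
  have hscaled : ∀ y ∈ Set.Icc (-1 : ℝ) 1,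
      √(1 - y ^ 2) * |(Q.comp (C x * X)).eval y| ≤ M := by
    intro y hy
    have hle : |x * y| ≤ |y| := by
      rw [abs_mul]
      exact mul_le_of_le_one_left (abs_nonneg y) (abs_le.mpr hx)
    have hsq : (x * y) ^ 2 ≤ y ^ 2 := sq_le_sq.mpr hle
    calc √(1 - y ^ 2) * |(Q.comp (C x * X)).eval y|
        ≤ √(1 - (x * y) ^ 2) * |Q.eval (x * y)| := by
          simp only [eval_comp, eval_mul, eval_C, eval_X]
          gcongr
      _ ≤ M := hM _ (abs_le.mp (hle.trans (abs_le.mpr hy)))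
  simpa using
    abs_eval_one_le_of_sqrt_one_sub_sq_mul_abs_eval_le
      ((degree_comp_C_mul_X_le Q x).trans_lt hQ) hscaled

end SchurInequality

section BernsteinInequality

theorem degree_U_natCast_sub_one_lt (R : Type*) [CommRing R] [IsDomain R] [NeZero (2 : R)]
    (n : ℕ) : (U R (n - 1)).degree < n := by
  cases n with
  | zero => simp
  | succ m =>
    rw [Nat.cast_succ, add_sub_cancel_right, degree_U_natCast]
    exact_mod_cast m.lt_succ_self

theorem exists_eval_cos_add_sub_eval_cos_sub {P : ℝ[X]} {n : ℕ} (hP : P.degree ≤ n) (φ : ℝ) :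
    ∃ Q : ℝ[X], Q.degree < n ∧ ∀ t : ℝ,
      P.eval (Real.cos (φ + t)) - P.eval (Real.cos (φ - t)) =
        2 * Real.sin t * Q.eval (Real.cos t) := by
  rw [← mem_degreeLE, ← Sequence.span_degreeLE (chebyshevTsequence ℝ) (by simp)] at hP
  induction hP using Submodule.span_induction with
  | mem _ hT =>
    obtain ⟨m, hm, rfl⟩ := hT
    refine ⟨-Real.sin (m * φ) • U ℝ (m - 1), ?_, fun t ↦ ?_⟩
    · refine (degree_smul_le _ _).trans_lt ((degree_U_natCast_sub_one_lt ℝ m).trans_le ?_)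
      exact_mod_cast hm
    · change (T ℝ m).eval _ - (T ℝ m).eval _ = _
      have hU : (U ℝ (m - 1)).eval (Real.cos t) * Real.sin t = Real.sin (m * t) := by
        simp
      rw [T_real_cos, T_real_cos, Int.cast_natCast, mul_add, mul_sub, Real.cos_add, Real.cos_sub,
        eval_smul, smul_eq_mul]
      linear_combination 2 * Real.sin (m * φ) * hU
  | zero => exact ⟨0, by simp, by simp⟩
  | add P₁ P₂ _ _ h₁ h₂ =>
    obtain ⟨Q₁, hQ₁, hPQ₁⟩ := h₁
    obtain ⟨Q₂, hQ₂, hPQ₂⟩ := h₂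
    refine ⟨Q₁ + Q₂, (degree_add_le _ _).trans_lt (max_lt hQ₁ hQ₂), fun t ↦ ?_⟩
    simp only [eval_add]
    linear_combination hPQ₁ t + hPQ₂ t
  | smul a P _ h =>
    obtain ⟨Q, hQ, hPQ⟩ := h
    refine ⟨a • Q, (degree_smul_le _ _).trans_lt hQ, fun t ↦ ?_⟩
    simp only [eval_smul, smul_eq_mul]
    linear_combination a * hPQ t

theorem eval_one_of_eval_cos_add_sub_eval_cos_sub {P Q : ℝ[X]} {φ : ℝ}
    (hPQ : ∀ t : ℝ, P.eval (Real.cos (φ + t)) - P.eval (Real.cos (φ - t)) =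
      2 * Real.sin t * Q.eval (Real.cos t)) :
    Q.eval 1 = -Real.sin φ * P.derivative.eval (Real.cos φ) := by
  have hleft : HasDerivAt (fun t ↦ P.eval (Real.cos (φ + t)) - P.eval (Real.cos (φ - t)))
      (2 * (-Real.sin φ * P.derivative.eval (Real.cos φ))) 0 := by
    have hadd : HasDerivAt (fun t ↦ P.eval (Real.cos (φ + t))) _ 0 :=
      (P.hasDerivAt _).comp 0 (((hasDerivAt_id' (0 : ℝ)).const_add φ).cos)
    have hsub : HasDerivAt (fun t ↦ P.eval (Real.cos (φ - t))) _ 0 :=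
      (P.hasDerivAt _).comp 0 (((hasDerivAt_id' (0 : ℝ)).const_sub φ).cos)
    refine (hadd.sub hsub).congr_deriv ?_
    rw [add_zero, sub_zero]
    ring
  have hright : HasDerivAt (fun t ↦ 2 * Real.sin t * Q.eval (Real.cos t)) (2 * Q.eval 1) 0 := by
    have hQcos : HasDerivAt (fun t ↦ Q.eval (Real.cos t)) _ 0 :=
      (Q.hasDerivAt _).comp 0 (Real.hasDerivAt_cos 0)
    refine (((Real.hasDerivAt_sin 0).const_mul 2).mul hQcos).congr_deriv ?_
    simp
  rw [funext hPQ] at hleft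
  exact mul_left_cancel₀ two_ne_zero (hright.unique hleft)

theorem sqrt_one_sub_sq_mul_abs_eval_derivative_le_of_abs_eval_le {P : ℝ[X]} {n : ℕ} {B : ℝ}
    (hP : P.degree ≤ n) (hB : ∀ x ∈ Set.Icc (-1 : ℝ) 1, |P.eval x| ≤ B) :
    ∀ x ∈ Set.Icc (-1 : ℝ) 1, √(1 - x ^ 2) * |P.derivative.eval x| ≤ n * B := by
  rintro x ⟨hx₁, hx₂⟩
  obtain ⟨φ, rfl⟩ : ∃ φ, Real.cos φ = x := ⟨_, Real.cos_arccos hx₁ hx₂⟩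
  obtain ⟨Q, hQ, hPQ⟩ := exists_eval_cos_add_sub_eval_cos_sub hP φ
  have hQB : ∀ y ∈ Set.Icc (-1 : ℝ) 1, √(1 - y ^ 2) * |Q.eval y| ≤ B := by
    rintro y ⟨hy₁, hy₂⟩
    obtain ⟨t, rfl⟩ : ∃ t, Real.cos t = y := ⟨_, Real.cos_arccos hy₁ hy₂⟩
    rw [← Real.abs_sin_eq_sqrt_one_sub_cos_sq]
    have hdouble : 2 * (|Real.sin t| * |Q.eval (Real.cos t)|) ≤ 2 * B := calc
      2 * (|Real.sin t| * |Q.eval (Real.cos t)|)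
          = |P.eval (Real.cos (φ + t)) - P.eval (Real.cos (φ - t))| := by
          rw [hPQ, abs_mul, abs_mul, abs_two, mul_assoc]
      _ ≤ |P.eval (Real.cos (φ + t))| + |P.eval (Real.cos (φ - t))| := abs_sub _ _
      _ ≤ 2 * B := by
          rw [two_mul]
          exact add_le_add (hB _ (Real.cos_mem_Icc _)) (hB _ (Real.cos_mem_Icc _))
    linarith
  calc √(1 - Real.cos φ ^ 2) * |P.derivative.eval (Real.cos φ)|
      = |Q.eval 1| := by
        rw [eval_one_of_eval_cos_add_sub_eval_cos_sub hPQ, abs_mul, abs_neg,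
          Real.abs_sin_eq_sqrt_one_sub_cos_sq]
    _ ≤ n * B := abs_eval_one_le_of_sqrt_one_sub_sq_mul_abs_eval_le hQ hQB

end BernsteinInequality

/-- (Markov's inequality for Schur's norm.) For every real polynomial `P`
of degree `n ≥ 1`,
`sup_{x∈[-1,1]} √(1-x²) |P'(x)| ≤ n(n+1) sup_{x∈[-1,1]} √(1-x²) |P(x)|`. -/
theorem statement18 (P : Polynomial ℝ) (n : ℕ) (hn : 1 ≤ n) (hdeg : P.natDegree = n) :
    (⨆ x : Set.Icc (-1 : ℝ) 1,
        Real.sqrt (1 - (x : ℝ) ^ 2) * |(Polynomial.derivative P).eval (x : ℝ)|) ≤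
      (n : ℝ) * ((n : ℝ) + 1) *
        ⨆ x : Set.Icc (-1 : ℝ) 1, Real.sqrt (1 - (x : ℝ) ^ 2) * |P.eval (x : ℝ)| := by
  set M := ⨆ x : Set.Icc (-1 : ℝ) 1, √(1 - (x : ℝ) ^ 2) * |P.eval (x : ℝ)|
  have hbdd : BddAbove (Set.range fun x : Set.Icc (-1 : ℝ) 1 ↦
      √(1 - (x : ℝ) ^ 2) * |P.eval (x : ℝ)|) :=
    (isCompact_range (by fun_prop)).bddAbove
  have hM : ∀ x ∈ Set.Icc (-1 : ℝ) 1, √(1 - x ^ 2) * |P.eval x| ≤ M :=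
    fun x hx ↦ le_ciSup hbdd ⟨x, hx⟩
  have hP : P.degree ≤ n := degree_le_of_natDegree_le hdeg.le
  have hP' : P.degree < (n + 1 : ℕ) := hP.trans_lt (mod_cast n.lt_succ_self)
  have hschur : ∀ x ∈ Set.Icc (-1 : ℝ) 1, |P.eval x| ≤ (n + 1) * M :=
    mod_cast abs_eval_le_of_sqrt_one_sub_sq_mul_abs_eval_le hP' hM
  have hbernstein : ∀ x ∈ Set.Icc (-1 : ℝ) 1,
      √(1 - x ^ 2) * |P.derivative.eval x| ≤ n * ((n + 1) * M) :=
    sqrt_one_sub_sq_mul_abs_eval_derivative_le_of_abs_eval_le hP hschur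
  have : Nonempty (Set.Icc (-1 : ℝ) 1) := ⟨⟨0, by simp⟩⟩
  rw [mul_assoc]
  exact ciSup_le fun x ↦ hbernstein x x.2
end

section
/- Let A be a commutative ring and D : A → A a derivation (additive map with D(fg) = f·D(g) + g·D(f)). Then for every f ∈ A and every integer k ≥ 1, k! · (D(f))^k = Σ_{j=0}^{k} (−1)^j · C(k,j) · f^j · D^{(k)}(f^{k−j}), where D^{(k)} denotes the k-fold iterate D ∘ ⋯ ∘ D and C(k,j) is the binomial coefficient. -/
/-!
Extend `D` to `A[X]` coefficientwise, so that `D X = 0`, and put `g = X + f`. Expanding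
`D^[k] (g ^ k)` by the Leibniz rule, a term is divisible by `g` unless the `k` derivations hit the
`k` factors once each, which happens in `k!` ways; hence `D^[k] (g ^ k) ≡ k! * (D f) ^ k` modulo
`g`. Evaluating at `X = -f` kills the multiples of `g`, while the binomial expansion of `g ^ k`
turns the left side into the required sum.
-/

/-- The induction on `k` needs the factor `u`, which absorbs the `D g` split off by each step. -/
theorem dvd_iterate_derivation_pow_mul_sub {R A : Type*} [CommSemiring R] [CommRing A] [Algebra R A]
    (D : Derivation R A A) (g u : A) (k : ℕ) :
    g ∣ D^[k] (g ^ k * u) - k.factorial * D g ^ k * u := by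
  induction k generalizing u with
  | zero => simp
  | succ k ih =>
    have leibniz_step : D (g ^ (k + 1) * u) = g ^ k * ((k + 1) * D g * u + g * D u) := by
      simp only [D.leibniz, D.leibniz_pow, add_tsub_cancel_right, smul_eq_mul, nsmul_eq_mul,
        Nat.cast_add, Nat.cast_one]
      ring
    rw [Function.iterate_succ_apply, leibniz_step]
    convert (ih ((k + 1) * D g * u + g * D u)).add
      (dvd_mul_right g (k.factorial * D g ^ k * D u)) using 1
    push_cast [Nat.factorial_succ]
    ring

section CoefficientwiseExtension

open Polynomial

variable {A : Type*} [CommRing A] [Differential A]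

theorem coeff_iterate_mapCoeffs (p : A[X]) (k n : ℕ) :
    (Differential.mapCoeffs^[k] p).coeff n = Differential.deriv^[k] (p.coeff n) := by
  induction k generalizing p with
  | zero => rfl
  | succ k ih => simp only [Function.iterate_succ_apply, ih, Differential.coeff_mapCoeffs]

theorem eval_iterate_mapCoeffs {p : A[X]} {n : ℕ} (hp : p.natDegree < n) (k : ℕ) (x : A) :
    (Differential.mapCoeffs^[k] p).eval x =
      ∑ j ∈ Finset.range n, Differential.deriv^[k] (p.coeff j) * x ^ j := by
  have natDegree_lt : (Differential.mapCoeffs^[k] p).natDegree < n := by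
    refine (natDegree_le_iff_coeff_eq_zero.2 fun j hj => ?_).trans_lt hp
    rw [coeff_iterate_mapCoeffs, coeff_eq_zero_of_natDegree_lt hj, iterate_map_zero]
  simp only [eval_eq_sum_range' natDegree_lt, coeff_iterate_mapCoeffs]

theorem eval_neg_iterate_mapCoeffs_X_add_C_pow (f : A) (k : ℕ) :
    (Differential.mapCoeffs^[k] ((X + C f) ^ k)).eval (-f) =
      k.factorial * Differential.deriv f ^ k := by
  have dvd_eval_neg := eval_dvd (x := -f)
    (dvd_iterate_derivation_pow_mul_sub Differential.mapCoeffs (X + C f) 1 k)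
  simpa [sub_eq_zero] using dvd_eval_neg

theorem factorial_mul_deriv_pow (f : A) (k : ℕ) :
    k.factorial * Differential.deriv f ^ k =
      ∑ j ∈ Finset.range (k + 1),
        (-1) ^ j * (k.choose j : A) * f ^ j * Differential.deriv^[k] (f ^ (k - j)) := by
  have natDegree_lt : ((X + C f) ^ k).natDegree < k + 1 :=
    Nat.lt_succ_of_le <| by
      simpa using natDegree_pow_le_of_le k (natDegree_add_C.trans_le natDegree_X_le)
  rw [← eval_neg_iterate_mapCoeffs_X_add_C_pow, eval_iterate_mapCoeffs natDegree_lt]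
  refine Finset.sum_congr rfl fun j _ => ?_
  rw [coeff_X_add_C_pow, mul_comm (f ^ (k - j)), ← nsmul_eq_mul, iterate_map_nsmul, nsmul_eq_mul,
    neg_pow]
  ring

end CoefficientwiseExtension

/-- Let `A` be a commutative ring and `D : A → A` a derivation
(additive map satisfying the Leibniz rule). Then for every `f ∈ A` and every `k ≥ 1`,
`k! * (D f)^k = ∑_{j=0}^{k} (-1)^j * C(k,j) * f^j * D^[k] (f^(k-j))`. -/
theorem statement19 {A : Type*} [CommRing A] (D : A → A)
    (hadd : ∀ x y : A, D (x + y) = D x + D y)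
    (hmul : ∀ x y : A, D (x * y) = x * D y + y * D x)
    (f : A) (k : ℕ) (hk : 1 ≤ k) :
    (k.factorial : A) * (D f) ^ k =
      ∑ j ∈ Finset.range (k + 1),
        (-1 : A) ^ j * (Nat.choose k j : A) * f ^ j * D^[k] (f ^ (k - j)) := by
  let _ : Differential A := ⟨Derivation.mk' (AddMonoidHom.mk' D hadd).toIntLinearMap hmul⟩
  exact factorial_mul_deriv_pow f k
end
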